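/- Let r ≥ 3 and n ≥ (r-1)(2r+1)/2, let H be an n-vertex T_r-free r-graph with δ⁺_{r-1}(H) > 2n/(2r+1), and let V_1, …, V_r be pairwise disjoint independent sets in H, each of size greater than 2n/(2r+1). Let Z = V(H) \ (V_1 ∪ ⋯ ∪ V_r), let v ∈ Z, and let v_1 ∈ N_H(v) ∩ V_1. Then there exists an edge e ∈ H containing both v and v_1 such that |e ∩ (V_2 ∪ ⋯ ∪ V_r)| ≥ r - 2. -/

import Mathlib

variable {V : Type*} [Fintype V] [DecidableEq V]

/-- The (r-1)-shadow of an r-graph: all (r-1)-sets contained in some edge. -/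
def sshadow (r : ℕ) (H : Finset (Finset V)) : Finset (Finset V) :=
  Finset.univ.filter (fun e => e.card = r - 1 ∧ ∃ E ∈ H, e ⊆ E)

/-- The codegree neighborhood of a set `e`: vertices `v` with `e ∪ {v} ∈ H`. -/
def nbhd (H : Finset (Finset V)) (e : Finset V) : Finset V :=
  Finset.univ.filter (fun v => insert v e ∈ H)

/-- The neighborhood of a vertex. -/
def vnbhd (H : Finset (Finset V)) (v : V) : Finset V :=
  Finset.univ.filter (fun u => u ≠ v ∧ ∃ E ∈ H, u ∈ E ∧ v ∈ E)

/-- `H` is T_r-free. -/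
def IsTrFree (r : ℕ) (H : Finset (Finset V)) : Prop :=
  ¬ ∃ (S W : Finset V) (a b : V),
      S.card = r - 1 ∧ W.card = r - 2 ∧ a ≠ b ∧
      a ∉ S ∧ b ∉ S ∧ a ∉ W ∧ b ∉ W ∧ Disjoint S W ∧
      insert a S ∈ H ∧ insert b S ∈ H ∧ insert a (insert b W) ∈ H

/-- A set of vertices is independent. -/
def IsIndep (H : Finset (Finset V)) (I : Finset V) : Prop :=
  ∀ E ∈ H, (E ∩ I).card ≤ 1

/-- `H` is r-partite. -/
def IsRPartite (r : ℕ) (H : Finset (Finset V)) : Prop :=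
  ∃ P : Fin r → Finset V, (∀ v : V, ∃! i, v ∈ P i) ∧ ∀ i, IsIndep H (P i)

/-- Minimum positive codegree. -/
noncomputable def minPosCodeg (r : ℕ) (H : Finset (Finset V)) : ℕ :=
  sInf {k | ∃ e ∈ sshadow r H, (nbhd H e).card = k}

/-!
Among the edges containing `v` and `v₁`, take `E` maximizing `|E ∩ U|`, where
`U = V_2 ∪ ⋯ ∪ V_r`. If `|E ∩ U| < r - 2`, some `z ∈ E` lies outside `U ∪ {v, v₁}`. Since the
codegree of `E \ {z}` and the sizes of the `V_i` add up to more than `n`, some `w` with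
`(E \ {z}) ∪ {w} ∈ H` lies in `V_1 ∪ U`. It is not in `V_1`, an independent set already met at
`v₁`, so it is in `U`, and exchanging `z` for `w` contradicts the maximality of `E`.
-/

section Hypergraph

variable {H : Finset (Finset V)} {r : ℕ} {A E U e : Finset V} {v v₁ w x y z : V}

lemma mem_nbhd : w ∈ nbhd H e ↔ insert w e ∈ H := by
  simp [nbhd]

lemma exists_edge_of_mem_vnbhd (h : x ∈ vnbhd H y) : ∃ E ∈ H, x ∈ E ∧ y ∈ E :=
  (Finset.mem_filter.1 h).2.2

lemma erase_mem_sshadow (hE : E ∈ H) (hcard : E.card = r) (hz : z ∈ E) :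
    E.erase z ∈ sshadow r H := by
  simp only [sshadow, Finset.mem_filter, Finset.mem_univ, true_and]
  exact ⟨by rw [Finset.card_erase_of_mem hz, hcard], E, hE, Finset.erase_subset z E⟩

lemma notMem_of_mem_nbhd (hH : ∀ E ∈ H, E.card = r) (he : e.card ≠ r) (hw : w ∈ nbhd H e) :
    w ∉ e := by
  intro hwe
  rw [mem_nbhd, Finset.insert_eq_of_mem hwe] at hw
  exact he (hH e hw)

omit [Fintype V] in
lemma IsIndep.eq_of_mem (hA : IsIndep H A) (hE : E ∈ H) (hxE : x ∈ E) (hyE : y ∈ E)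
    (hxA : x ∈ A) (hyA : y ∈ A) : x = y :=
  Finset.card_le_one.1 (hA E hE) x (Finset.mem_inter.2 ⟨hxE, hxA⟩) y
    (Finset.mem_inter.2 ⟨hyE, hyA⟩)

omit [Fintype V] in
lemma exists_mem_notMem_ne_ne (h : (E ∩ U).card + 2 < E.card) (x y : V) :
    ∃ z ∈ E, z ∉ U ∧ z ≠ x ∧ z ≠ y := by
  have hlt : ({x, y} : Finset V).card < (E \ U).card := by
    have hxy : ({x, y} : Finset V).card ≤ 2 := Finset.card_le_two
    have hE := Finset.card_sdiff_add_card_inter E U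
    omega
  obtain ⟨z, hz, hzxy⟩ := Finset.exists_mem_notMem_of_card_lt_card hlt
  simp only [Finset.mem_insert, Finset.mem_singleton, not_or] at hzxy
  obtain ⟨hzE, hzU⟩ := Finset.mem_sdiff.1 hz
  exact ⟨z, hzE, hzU, hzxy⟩

omit [Fintype V] in
lemma card_inter_lt_card_insert_erase_inter (hz : z ∉ U) (hwU : w ∈ U) (hw : w ∉ E.erase z) :
    (E ∩ U).card < (insert w (E.erase z) ∩ U).card := by
  have hEU : E.erase z ∩ U = E ∩ U := by
    rw [Finset.erase_inter, Finset.erase_eq_of_notMem (by simp [hz])]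
  have hwEU : w ∉ E ∩ U := hEU ▸ fun h => hw (Finset.mem_inter.1 h).1
  rw [Finset.insert_inter_of_mem hwU, hEU, Finset.card_insert_of_notMem hwEU]
  exact Nat.lt_succ_self _

lemma exists_edge_card_inter_lt (hH : ∀ E ∈ H, E.card = r) (hA : IsIndep H A)
    (hmeet : ∀ e ∈ sshadow r H, ∃ w ∈ nbhd H e, w ∈ A ∪ U) (hv₁A : v₁ ∈ A)
    (hE : E ∈ H) (hv : v ∈ E) (hv₁ : v₁ ∈ E) (hlt : (E ∩ U).card < r - 2) :
    ∃ F ∈ H, v ∈ F ∧ v₁ ∈ F ∧ (E ∩ U).card < (F ∩ U).card := by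
  have hcard : E.card = r := hH E hE
  obtain ⟨z, hzE, hzU, hzv, hzv₁⟩ : ∃ z ∈ E, z ∉ U ∧ z ≠ v ∧ z ≠ v₁ :=
    exists_mem_notMem_ne_ne (by omega) v v₁
  obtain ⟨w, hw, hwAU⟩ := hmeet _ (erase_mem_sshadow hE hcard hzE)
  have hF : insert w (E.erase z) ∈ H := mem_nbhd.1 hw
  have hwE : w ∉ E.erase z :=
    notMem_of_mem_nbhd hH (hcard ▸ (Finset.card_erase_lt_of_mem hzE).ne) hw
  have hv₁E : v₁ ∈ E.erase z := Finset.mem_erase.2 ⟨hzv₁.symm, hv₁⟩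
  have hv₁F : v₁ ∈ insert w (E.erase z) := Finset.mem_insert_of_mem hv₁E
  have hwA : w ∉ A := fun hwA =>
    hwE (hA.eq_of_mem hF (Finset.mem_insert_self _ _) hv₁F hwA hv₁A ▸ hv₁E)
  have hwU : w ∈ U := (Finset.mem_union.1 hwAU).resolve_left hwA
  exact ⟨_, hF, Finset.mem_insert_of_mem (Finset.mem_erase.2 ⟨hzv.symm, hv⟩), hv₁F,
    card_inter_lt_card_insert_erase_inter hzU hwU hwE⟩

lemma exists_edge_sub_two_le_card_inter (hH : ∀ E ∈ H, E.card = r) (hA : IsIndep H A)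
    (hmeet : ∀ e ∈ sshadow r H, ∃ w ∈ nbhd H e, w ∈ A ∪ U) (hv₁A : v₁ ∈ A)
    (hv₁ : v₁ ∈ vnbhd H v) :
    ∃ E ∈ H, v ∈ E ∧ v₁ ∈ E ∧ r - 2 ≤ (E ∩ U).card := by
  obtain ⟨E₀, hE₀, hv₁E₀, hvE₀⟩ := exists_edge_of_mem_vnbhd hv₁
  obtain ⟨E, hE, hmax⟩ := (H.filter fun E => v ∈ E ∧ v₁ ∈ E).exists_max_image
    (fun E => (E ∩ U).card) ⟨E₀, Finset.mem_filter.2 ⟨hE₀, hvE₀, hv₁E₀⟩⟩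
  obtain ⟨hEH, hvE, hv₁E⟩ := Finset.mem_filter.1 hE
  refine ⟨E, hEH, hvE, hv₁E, le_of_not_gt fun hlt => ?_⟩
  obtain ⟨F, hF, hvF, hv₁F, hEF⟩ :=
    exists_edge_card_inter_lt hH hA hmeet hv₁A hEH hvE hv₁E hlt
  exact (hmax F (Finset.mem_filter.2 ⟨hF, hvF, hv₁F⟩)).not_gt hEF

end Hypergraph

section Counting

variable {ι : Type*} [Fintype ι]

lemma exists_mem_mem_biUnion_of_card_lt_add_sum {P : ι → Finset V} {s : Finset V}
    (hdisj : ∀ i j, i ≠ j → Disjoint (P i) (P j))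
    (hcard : Fintype.card V < s.card + ∑ i, (P i).card) :
    ∃ w ∈ s, w ∈ Finset.univ.biUnion P := by
  rw [← Finset.card_biUnion fun i _ j _ => hdisj i j] at hcard
  simpa [Finset.Nonempty] using
    Finset.inter_nonempty_of_card_lt_card_add_card s.subset_univ
      (Finset.subset_univ (Finset.univ.biUnion P)) hcard

lemma lt_add_sum_of_two_mul_div_lt {n d : ℕ} {a : ι → ℕ}
    (hd : 2 * (n : ℝ) / (2 * Fintype.card ι + 1) < d)
    (ha : ∀ i, 2 * (n : ℝ) / (2 * Fintype.card ι + 1) ≤ a i) : n < d + ∑ i, a i := by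
  set c : ℝ := 2 * n / (2 * Fintype.card ι + 1) with hc
  have hsum : Fintype.card ι * c ≤ ∑ i, (a i : ℝ) := by
    simpa using Finset.card_nsmul_le_sum Finset.univ (fun i => (a i : ℝ)) c fun i _ => ha i
  have hn : (n : ℝ) ≤ (Fintype.card ι + 1) * c := by
    rw [hc, ← mul_div_assoc, le_div_iff₀ (by positivity)]
    linarith [Nat.cast_nonneg (α := ℝ) n]
  have hlt : (n : ℝ) < d + ∑ i, (a i : ℝ) := by linarith
  exact_mod_cast hlt

end Counting

theorem stmt9_general {ι : Type*} [Fintype ι] [DecidableEq ι] {r : ℕ}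
    {H : Finset (Finset V)} (hH : ∀ E ∈ H, E.card = r) {P : ι → Finset V}
    (hdisj : ∀ i j, i ≠ j → Disjoint (P i) (P j))
    (hcard : ∀ e ∈ sshadow r H, Fintype.card V < (nbhd H e).card + ∑ i, (P i).card)
    {i₀ : ι} (hindep : IsIndep H (P i₀)) {v v₁ : V} (hv₁ : v₁ ∈ vnbhd H v ∩ P i₀) :
    ∃ E ∈ H, v ∈ E ∧ v₁ ∈ E ∧ r - 2 ≤ (E ∩ (Finset.univ.erase i₀).biUnion P).card := by
  obtain ⟨hv₁v, hv₁P⟩ := Finset.mem_inter.1 hv₁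
  have hunion : Finset.univ.biUnion P = P i₀ ∪ (Finset.univ.erase i₀).biUnion P := by
    rw [← Finset.biUnion_insert, Finset.insert_erase (Finset.mem_univ i₀)]
  refine exists_edge_sub_two_le_card_inter hH hindep (fun e he => ?_) hv₁P hv₁v
  exact hunion ▸ exists_mem_mem_biUnion_of_card_lt_add_sum hdisj (hcard e he)

/-- Setting of the proof of the main theorem: `V_1, …, V_r` are pairwise disjoint independent
sets of size greater than `2n/(2r+1)` each, `v` is a vertex outside all of them, and
`v₁ ∈ N_H(v) ∩ V_1`. Then some edge `E ∈ H` contains both `v` and `v₁` and satisfies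
`|E ∩ (V_2 ∪ ⋯ ∪ V_r)| ≥ r - 2`. -/
theorem stmt9 {V : Type*} [Fintype V] [DecidableEq V] {r n : ℕ} (hr : 3 ≤ r)
    (hn : ((r : ℝ) - 1) * (2 * r + 1) / 2 ≤ n) (hV : Fintype.card V = n)
    {H : Finset (Finset V)} (hH : ∀ E ∈ H, E.card = r)
    (hfree : IsTrFree r H)
    (hdeg : ∀ e ∈ sshadow r H, 2 * (n : ℝ) / (2 * r + 1) < ((nbhd H e).card : ℝ))
    (P : Fin r → Finset V)
    (hdisj : ∀ i j, i ≠ j → Disjoint (P i) (P j))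
    (hindep : ∀ i, IsIndep H (P i))
    (hsize : ∀ i, 2 * (n : ℝ) / (2 * r + 1) < ((P i).card : ℝ))
    {v : V} (hv : ∀ i, v ∉ P i)
    {v₁ : V} (hv₁ : v₁ ∈ vnbhd H v ∩ P ⟨0, by omega⟩) :
    ∃ E ∈ H, v ∈ E ∧ v₁ ∈ E ∧
      r - 2 ≤ (E ∩ (Finset.univ.erase (⟨0, by omega⟩ : Fin r)).biUnion P).card :=
  stmt9_general hH hdisj (fun e he => hV ▸ lt_add_sum_of_two_mul_div_lt
    (by simpa using hdeg e he) (by simpa using fun i => (hsize i).le)) (hindep _) hv₁
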